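/- arXiv:2103.07698 — 2 statements merged into one kernel-verified Lean document; each statement's English description precedes it below -/
import Mathlib

section
/- For j ∈ {0,1} and every τ in the complex upper half plane, f_{2,j}(−1/(2τ)) = ((−1)ʲ − i)·τ·f_{2,j+1}(τ), where the index j+1 is taken modulo 2. -/
open Complex

/-- `q = exp(2πiτ)`. -/
noncomputable def qq (τ : ℂ) : ℂ := Complex.exp (2 * Real.pi * Complex.I * τ)

/-- `σ_k(n) = Σ_{d ∣ n} d^k`, as a complex number. -/
noncomputable def sigmaC (k n : ℕ) : ℂ := ∑ d ∈ n.divisors, (d : ℂ) ^ k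

/-- Eisenstein series `E₂(τ) = 1 - 24 Σ_{n≥1} σ₁(n) qⁿ`. -/
noncomputable def E₂ (τ : ℂ) : ℂ := 1 - 24 * ∑' n : ℕ, sigmaC 1 (n + 1) * qq τ ^ (n + 1)

/-- Eisenstein series `E₄(τ) = 1 + 240 Σ_{n≥1} σ₃(n) qⁿ`. -/
noncomputable def E₄ (τ : ℂ) : ℂ := 1 + 240 * ∑' n : ℕ, sigmaC 3 (n + 1) * qq τ ^ (n + 1)

/-- Eisenstein series `E₆(τ) = 1 - 504 Σ_{n≥1} σ₅(n) qⁿ`. -/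
noncomputable def E₆ (τ : ℂ) : ℂ := 1 - 504 * ∑' n : ℕ, sigmaC 5 (n + 1) * qq τ ^ (n + 1)

/-- Dedekind eta function `η(τ) = exp(πiτ/12) ∏_{n≥1} (1 - qⁿ)`. -/
noncomputable def η (τ : ℂ) : ℂ :=
  Complex.exp (Real.pi * Complex.I * τ / 12) * ∏' n : ℕ, (1 - qq τ ^ (n + 1))

/-- Theta function `θ(τ) = Σ_{n ∈ ℤ} q^{n²}`. -/
noncomputable def θ (τ : ℂ) : ℂ := ∑' n : ℤ, qq τ ^ (n ^ 2)

/-- The character `χ₋₄`: `χ₋₄(d) = 1, -1, 0` according as `d ≡ 1, 3, 0/2 (mod 4)`. -/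
noncomputable def χ₄ (d : ℕ) : ℂ := if d % 4 = 1 then 1 else if d % 4 = 3 then -1 else 0

/-- The character `χ₋₃`: `χ₋₃(d) = 1, -1, 0` according as `d ≡ 1, 2, 0 (mod 3)`. -/
noncomputable def χ₃ (d : ℕ) : ℂ := if d % 3 = 1 then 1 else if d % 3 = 2 then -1 else 0

/-- `E_{1,-4}(τ) = 1/4 + Σ_{n≥1} (Σ_{d∣n} χ₋₄(d)) qⁿ`. -/
noncomputable def E₁₄ (τ : ℂ) : ℂ :=
  1 / 4 + ∑' n : ℕ, (∑ d ∈ (n + 1).divisors, χ₄ d) * qq τ ^ (n + 1)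

/-- `E_{1,-3}(τ) = 1/6 + Σ_{n≥1} (Σ_{d∣n} χ₋₃(d)) qⁿ`. -/
noncomputable def E₁₃ (τ : ℂ) : ℂ :=
  1 / 6 + ∑' n : ℕ, (∑ d ∈ (n + 1).divisors, χ₃ d) * qq τ ^ (n + 1)

/-- `E_{2,2}(τ) = 2E₂(2τ) - E₂(τ)`. -/
noncomputable def E₂₂ (τ : ℂ) : ℂ := 2 * E₂ (2 * τ) - E₂ τ

/-- `E_{2,4}(τ) = (4E₄(2τ) - E₄(τ))/3`. -/
noncomputable def E₂₄ (τ : ℂ) : ℂ := (4 * E₄ (2 * τ) - E₄ τ) / 3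

/-- `E_{3,2}(τ) = (3E₂(3τ) - E₂(τ))/2`. -/
noncomputable def E₃₂ (τ : ℂ) : ℂ := (3 * E₂ (3 * τ) - E₂ τ) / 2

/-- `E_{3,4}(τ) = (9E₄(3τ) - E₄(τ))/8`. -/
noncomputable def E₃₄ (τ : ℂ) : ℂ := (9 * E₄ (3 * τ) - E₄ τ) / 8

/-- `E_{4,2}(τ) = (4E₂(4τ) - E₂(τ))/3`. -/
noncomputable def E₄₂ (τ : ℂ) : ℂ := (4 * E₂ (4 * τ) - E₂ τ) / 3

/-- `E'_{4,2}(τ) = 4E₂(4τ) - 4E₂(2τ) + E₂(τ)`. -/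
noncomputable def E₄₂' (τ : ℂ) : ℂ := 4 * E₂ (4 * τ) - 4 * E₂ (2 * τ) + E₂ τ

/-- `f_{1,j}(τ) = 2E₂(τ) - ((3+(-1)ʲi√3)/6)E₂(τ/2) - ((3-(-1)ʲi√3)/6)E₂((τ+1)/2)`. -/
noncomputable def f₁ (j : ℕ) (τ : ℂ) : ℂ :=
  2 * E₂ τ - ((3 + (-1 : ℂ) ^ j * Complex.I * Real.sqrt 3) / 6) * E₂ (τ / 2)
    - ((3 - (-1 : ℂ) ^ j * Complex.I * Real.sqrt 3) / 6) * E₂ ((τ + 1) / 2)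

/-- `g_{1,j}(τ) = (3/2)E₂(τ) - (1/4) Σ_{0≤m≤2, m≢j (mod 3)} E₂((τ+m)/3)`. -/
noncomputable def g₁ (j : ℕ) (τ : ℂ) : ℂ :=
  (3 / 2) * E₂ τ -
    (1 / 4) * ∑ m ∈ (Finset.range 3).filter (fun m => ¬ m % 3 = j % 3), E₂ ((τ + m) / 3)

/-- `f_{2,j}(τ) = 4E_{1,-4}(τ) + (-1)ʲ·2i·(E_{1,-4}(τ/2) - E_{1,-4}((τ+1)/2))`. -/
noncomputable def f₂ (j : ℕ) (τ : ℂ) : ℂ :=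
  4 * E₁₄ τ + (-1 : ℂ) ^ j * 2 * Complex.I * (E₁₄ (τ / 2) - E₁₄ ((τ + 1) / 2))

/-- `f_{3,j}(τ) = 6E_{1,-3}(2τ) + (-1)ʲ·i√3·(E_{1,-3}(τ/2) - E_{1,-3}((τ+1)/2))`. -/
noncomputable def f₃ (j : ℕ) (τ : ℂ) : ℂ :=
  6 * E₁₃ (2 * τ) +
    (-1 : ℂ) ^ j * Complex.I * Real.sqrt 3 * (E₁₃ (τ / 2) - E₁₃ ((τ + 1) / 2))

/-- `f_{4,j}(τ) = θ(τ/2 - (-1)ʲ/4)`. -/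
noncomputable def f₄ (j : ℕ) (τ : ℂ) : ℂ := θ (τ / 2 - (-1 : ℂ) ^ j / 4)

/-- `g_{4,j}(τ) = 2θ(2τ)² - θ((τ+j)/2)²`. -/
noncomputable def g₄ (j : ℕ) (τ : ℂ) : ℂ := 2 * θ (2 * τ) ^ 2 - θ ((τ + j) / 2) ^ 2

/-- `E_{3,-3,1}(τ) = -1/9 + Σ_{n≥1} (Σ_{d∣n} d²χ₋₃(d)) qⁿ`. -/
noncomputable def E₃₃₁ (τ : ℂ) : ℂ :=
  -(1 / 9) + ∑' n : ℕ, (∑ d ∈ (n + 1).divisors, (d : ℂ) ^ 2 * χ₃ d) * qq τ ^ (n + 1)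

/-- `E_{3,1,-3}(τ) = Σ_{n≥1} (Σ_{d∣n} d²χ₋₃(n/d)) qⁿ`. -/
noncomputable def E₃₁₃ (τ : ℂ) : ℂ :=
  ∑' n : ℕ, (∑ d ∈ (n + 1).divisors, (d : ℂ) ^ 2 * χ₃ ((n + 1) / d)) * qq τ ^ (n + 1)

/-- The Gaussian integers of norm `n`, i.e. the representations of `n` as a sum of two squares. -/
def gaussianNormFiber (n : ℕ) : Set GaussianInt := {α | α.norm = n}

/-- The twisted divisor sum `Σ_{d ∣ n} χ₋₄(d)`. -/
noncomputable def chiDivisorSum (n : ℕ) : ℂ := ∑ d ∈ n.divisors, χ₄ d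

lemma χ₄_mul (m n : ℕ) : χ₄ (m * n) = χ₄ m * χ₄ n := by
  have hm : m % 4 < 4 := Nat.mod_lt _ (by norm_num)
  have hn : n % 4 < 4 := Nat.mod_lt _ (by norm_num)
  unfold χ₄
  rw [Nat.mul_mod]
  generalize m % 4 = a at *
  generalize n % 4 = b at *
  interval_cases a <;> interval_cases b <;> norm_num

/-- The divisors of `p * m` are `D ∪ p D`, with `D` the divisors of `m`. -/
lemma divisors_prime_mul {p m : ℕ} (hp : p.Prime) (hm : m ≠ 0) :
    (p * m).divisors = m.divisors ∪ m.divisors.image (p * ·) := by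
  ext d
  simp only [Nat.mem_divisors, Finset.mem_union, Finset.mem_image]
  constructor
  · rintro ⟨h, -⟩
    by_cases hd : p ∣ d
    · obtain ⟨e, rfl⟩ := hd
      exact Or.inr ⟨e, ⟨Nat.dvd_of_mul_dvd_mul_left hp.pos h, hm⟩, rfl⟩
    · exact Or.inl ⟨((Nat.Prime.coprime_iff_not_dvd hp).2 hd).symm.dvd_of_dvd_mul_left h, hm⟩
  · rintro (⟨h, -⟩ | ⟨e, ⟨h, -⟩, rfl⟩)
    · exact ⟨h.mul_left p, mul_ne_zero hp.ne_zero hm⟩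
    · exact ⟨Nat.mul_dvd_mul_left p h, mul_ne_zero hp.ne_zero hm⟩

lemma divisors_inter_image_prime_mul {p m : ℕ} (hp : p.Prime) (hm : m ≠ 0) :
    m.divisors ∩ m.divisors.image (p * ·) =
      if p ∣ m then (m / p).divisors.image (p * ·) else ∅ := by
  split_ifs with h
  · obtain ⟨k, rfl⟩ := h
    have hk : k ≠ 0 := right_ne_zero_of_mul hm
    rw [Nat.mul_div_cancel_left k hp.pos]
    ext d
    simp only [Nat.mem_divisors, Finset.mem_inter, Finset.mem_image]
    constructor
    · rintro ⟨⟨h, -⟩, e, -, rfl⟩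
      exact ⟨e, ⟨Nat.dvd_of_mul_dvd_mul_left hp.pos h, hk⟩, rfl⟩
    · rintro ⟨e, ⟨h, -⟩, rfl⟩
      exact ⟨⟨Nat.mul_dvd_mul_left p h, hm⟩, e, ⟨h.mul_left p, hm⟩, rfl⟩
  · ext d
    simp only [Nat.mem_divisors, Finset.mem_inter, Finset.mem_image, Finset.notMem_empty,
      iff_false]
    rintro ⟨⟨hd, -⟩, e, -, rfl⟩
    exact h ((Dvd.intro e rfl).trans hd)

/-- The Hecke recursion at the prime `p` for functions with character `χ₋₄`. -/
def HeckeRecursion (f : ℕ → ℂ) : Prop :=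
  ∀ p m : ℕ, p.Prime → m ≠ 0 →
    f (p * m) = (1 + χ₄ p) * f m - χ₄ p * (if p ∣ m then f (m / p) else 0)

lemma HeckeRecursion.eq {f g : ℕ → ℂ} (hf : HeckeRecursion f) (hg : HeckeRecursion g)
    (h1 : f 1 = g 1) {n : ℕ} (hn : n ≠ 0) : f n = g n := by
  induction n using Nat.strong_induction_on with
  | _ n ih =>
    by_cases hn1 : n = 1
    · rw [hn1, h1]
    · have hp := Nat.minFac_prime hn1
      obtain ⟨m, hm⟩ := n.minFac_dvd
      generalize n.minFac = p at hp hm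
      subst hm
      have hm0 : m ≠ 0 := right_ne_zero_of_mul hn
      have hlt : m < p * m := lt_mul_of_one_lt_left (Nat.pos_of_ne_zero hm0) hp.one_lt
      rw [hf p m hp hm0, hg p m hp hm0, ih m hlt hm0]
      split_ifs with hd
      · rw [ih (m / p) ((Nat.div_le_self m p).trans_lt hlt)
          (Nat.div_pos (Nat.le_of_dvd (Nat.pos_of_ne_zero hm0) hd) hp.pos).ne']
      · rfl

lemma heckeRecursion_chiDivisorSum : HeckeRecursion chiDivisorSum := by
  intro p m hp hm
  have himage (s : Finset ℕ) : ∑ d ∈ s.image (p * ·), χ₄ d = χ₄ p * ∑ d ∈ s, χ₄ d := by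
    rw [Finset.sum_image (fun _ _ _ _ h => Nat.eq_of_mul_eq_mul_left hp.pos h), Finset.mul_sum]
    simp only [χ₄_mul]
  have h := Finset.sum_union_inter (s₁ := m.divisors) (s₂ := m.divisors.image (p * ·)) (f := χ₄)
  rw [← divisors_prime_mul hp hm, divisors_inter_image_prime_mul hp hm, himage] at h
  unfold chiDivisorSum
  split_ifs at h ⊢
  · rw [himage] at h
    linear_combination h
  · rw [Finset.sum_empty] at h
    linear_combination h

lemma finite_gaussianNormFiber (n : ℕ) : (gaussianNormFiber n).Finite := by
  have hinj : Function.Injective fun α : GaussianInt => (α.re, α.im) := fun α β h => by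
    simpa [Zsqrtd.ext_iff] using h
  refine Set.Finite.of_finite_image (f := fun α : GaussianInt => (α.re, α.im))
    (((Set.finite_Icc (-n : ℤ) n).prod (Set.finite_Icc (-n : ℤ) n)).subset ?_) hinj.injOn
  rintro _ ⟨α, hα, rfl⟩
  have h : α.re * α.re + α.im * α.im = n := by
    have : α.norm = n := hα
    rw [Zsqrtd.norm_def] at this
    linarith
  simp only [Set.mem_prod, Set.mem_Icc]
  refine ⟨⟨?_, ?_⟩, ?_, ?_⟩ <;> nlinarith [mul_self_nonneg α.re, mul_self_nonneg α.im]

/-- The elements of norm `k * m` divisible by `π` of norm `k` are the multiples `π β` with `β` of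
norm `m`. -/
lemma gaussianNormFiber_inter_dvd {π : GaussianInt} {k : ℕ} (hk : k ≠ 0) (hπ : π.norm = k)
    (m : ℕ) :
    gaussianNormFiber (k * m) ∩ {α | π ∣ α} = (π * ·) '' gaussianNormFiber m := by
  ext α
  simp only [gaussianNormFiber, Set.mem_inter_iff, Set.mem_ofPred_eq, Set.mem_image]
  constructor
  · rintro ⟨h, β, rfl⟩
    rw [Zsqrtd.norm_mul, hπ, Nat.cast_mul] at h
    exact ⟨β, mul_left_cancel₀ (Nat.cast_ne_zero.2 hk) h, rfl⟩
  · rintro ⟨β, h, rfl⟩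
    exact ⟨by rw [Zsqrtd.norm_mul, hπ, h, Nat.cast_mul], Dvd.intro β rfl⟩

lemma ncard_gaussianNormFiber_inter_dvd {π : GaussianInt} {k : ℕ} (hk : k ≠ 0) (hπ : π.norm = k)
    (m : ℕ) :
    (gaussianNormFiber (k * m) ∩ {α | π ∣ α}).ncard = (gaussianNormFiber m).ncard := by
  have hπ0 : π ≠ 0 := by
    rintro rfl
    rw [Zsqrtd.norm_zero] at hπ
    exact hk (by exact_mod_cast hπ.symm)
  rw [gaussianNormFiber_inter_dvd hk hπ, Set.ncard_image_of_injective _ (mul_right_injective₀ hπ0)]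

lemma ncard_gaussianNormFiber_inter_natCast_dvd {p m : ℕ} (hp : p ≠ 0) :
    (gaussianNormFiber (p * m) ∩ {α | (p : GaussianInt) ∣ α}).ncard =
      if p ∣ m then (gaussianNormFiber (m / p)).ncard else 0 := by
  split_ifs with h
  · obtain ⟨k, rfl⟩ := h
    rw [← mul_assoc, Nat.mul_div_cancel_left k (Nat.pos_of_ne_zero hp)]
    exact ncard_gaussianNormFiber_inter_dvd (mul_ne_zero hp hp) (by simp) k
  · rw [Set.ncard_eq_zero ((finite_gaussianNormFiber _).inter_of_left _)]
    ext α
    simp only [gaussianNormFiber, Set.mem_inter_iff, Set.mem_ofPred_eq, Set.mem_empty_iff_false,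
      iff_false]
    rintro ⟨hα, β, rfl⟩
    rw [Zsqrtd.norm_mul, Zsqrtd.norm_natCast, Nat.cast_mul, mul_assoc] at hα
    have := mul_left_cancel₀ (Nat.cast_ne_zero.2 hp) hα
    exact h (Int.natCast_dvd_natCast.1 ⟨_, this.symm⟩)

lemma prime_of_norm_prime {π : GaussianInt} {p : ℕ} (hp : p.Prime) (hπ : π.norm = p) :
    Prime π := by
  rw [← irreducible_iff_prime, irreducible_iff]
  refine ⟨fun h => ?_, fun a b hab => ?_⟩
  · rw [← Zsqrtd.norm_eq_one_iff, hπ] at h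
    exact hp.ne_one h
  · have h : a.norm.natAbs * b.norm.natAbs = p := by
      rw [← Int.natAbs_mul, ← Zsqrtd.norm_mul, ← hab, hπ, Int.natAbs_natCast]
    rw [← Zsqrtd.norm_eq_one_iff, ← Zsqrtd.norm_eq_one_iff]
    exact (Nat.prime_mul_iff.1 (h ▸ hp)).elim (fun h => Or.inr h.2) (fun h => Or.inl h.2)

lemma dvd_or_star_dvd {π α : GaussianInt} (hprime : Prime π) {m : ℤ}
    (hα : α.norm = π.norm * m) : π ∣ α ∨ star π ∣ α := by
  have h : π ∣ α * star α := by
    rw [← Zsqrtd.norm_eq_mul_conj, hα, Int.cast_mul, Zsqrtd.norm_eq_mul_conj, mul_assoc]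
    exact Dvd.intro _ rfl
  refine (hprime.dvd_or_dvd h).imp_right ?_
  rintro ⟨β, hβ⟩
  exact ⟨star β, by rw [← star_star α, hβ, star_mul, mul_comm]⟩

lemma ncard_gaussianNormFiber_two_mul (m : ℕ) :
    (gaussianNormFiber (2 * m)).ncard = (gaussianNormFiber m).ncard := by
  have hπ : (⟨1, 1⟩ : GaussianInt).norm = (2 : ℕ) := rfl
  rw [← ncard_gaussianNormFiber_inter_dvd two_ne_zero hπ m]
  congr 1
  rw [eq_comm, Set.inter_eq_left]
  intro α hα
  rcases dvd_or_star_dvd (α := α) (prime_of_norm_prime Nat.prime_two hπ) (m := m)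
    (by rw [hπ, ← Nat.cast_mul]; exact hα) with h | h
  · exact h
  · exact Dvd.dvd.trans ⟨⟨0, -1⟩, by decide⟩ h

lemma ncard_gaussianNormFiber_of_mod_four_eq_three {p m : ℕ} (hp : p.Prime) (hp3 : p % 4 = 3) :
    (gaussianNormFiber (p * m)).ncard =
      if p ∣ m then (gaussianNormFiber (m / p)).ncard else 0 := by
  have := Fact.mk hp
  have hprime := GaussianInt.prime_of_nat_prime_of_mod_four_eq_three p hp3
  rw [← ncard_gaussianNormFiber_inter_natCast_dvd hp.ne_zero]
  congr 1
  rw [eq_comm, Set.inter_eq_left]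
  intro α hα
  have h : (p : GaussianInt) ∣ α * star α := by
    have : α.norm = (p * m : ℕ) := hα
    rw [← Zsqrtd.norm_eq_mul_conj, this]
    exact ⟨m, by push_cast; rfl⟩
  rcases hprime.dvd_or_dvd h with h | ⟨β, hβ⟩
  · exact h
  · exact ⟨star β, by rw [← star_star α, hβ, star_mul, mul_comm, star_natCast]⟩

lemma not_star_dvd_self {π : GaussianInt} {p : ℕ} (hp : p.Prime) (hp2 : p ≠ 2)
    (hπ : π.norm = p) : ¬ star π ∣ π := by
  intro h
  have h2 : star π ∣ ((2 * π.re : ℤ) : GaussianInt) := by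
    have : ((2 * π.re : ℤ) : GaussianInt) = π + star π := by
      ext <;> simp [two_mul]
    rw [this]
    exact dvd_add h dvd_rfl
  obtain ⟨β, hβ⟩ := h2
  have hnorm := congrArg Zsqrtd.norm hβ
  rw [Zsqrtd.norm_intCast, Zsqrtd.norm_mul, Zsqrtd.norm_conj, hπ] at hnorm
  have hpi : Prime (p : ℤ) := Nat.prime_iff_prime_int.1 hp
  have hdvd : (p : ℤ) ∣ 2 * π.re := (hpi.dvd_or_dvd ⟨_, hnorm⟩).elim id id
  have hre : (p : ℤ) ∣ π.re := by
    refine (hpi.dvd_or_dvd hdvd).resolve_left fun h => hp2 ?_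
    exact (Nat.prime_dvd_prime_iff_eq hp Nat.prime_two).1 (by exact_mod_cast h)
  have him : (p : ℤ) ∣ π.im := by
    refine hpi.dvd_of_dvd_pow (n := 2) ?_
    have : π.im ^ 2 = p - π.re * π.re := by
      rw [Zsqrtd.norm_def] at hπ
      linarith
    rw [this]
    exact dvd_sub dvd_rfl (hre.mul_left _)
  obtain ⟨a, ha⟩ := hre
  obtain ⟨b, hb⟩ := him
  rw [Zsqrtd.norm_def, ha, hb] at hπ
  refine hpi.not_dvd_one ⟨a * a + b * b, ?_⟩
  refine mul_left_cancel₀ hpi.ne_zero ?_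
  linear_combination -hπ

lemma ncard_gaussianNormFiber_of_mod_four_eq_one {p m : ℕ} (hp : p.Prime) (hp1 : p % 4 = 1) :
    (gaussianNormFiber (p * m)).ncard +
      (if p ∣ m then (gaussianNormFiber (m / p)).ncard else 0) =
        2 * (gaussianNormFiber m).ncard := by
  have := Fact.mk hp
  obtain ⟨a, b, hab⟩ := Nat.Prime.sq_add_sq (p := p) (by omega)
  obtain ⟨π, hπ⟩ : ∃ π : GaussianInt, π.norm = p :=
    ⟨⟨a, b⟩, by rw [Zsqrtd.norm_def, ← hab]; push_cast; ring⟩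
  have hπ' : (star π).norm = p := by rw [Zsqrtd.norm_conj, hπ]
  have hprime := prime_of_norm_prime hp hπ
  have hprime' := prime_of_norm_prime hp hπ'
  have hunion : gaussianNormFiber (p * m) ∩ {α | π ∣ α} ∪
      gaussianNormFiber (p * m) ∩ {α | star π ∣ α} = gaussianNormFiber (p * m) := by
    rw [← Set.inter_union_distrib_left, Set.inter_eq_left]
    intro α hα
    exact dvd_or_star_dvd hprime (m := m) (by rw [hπ, ← Nat.cast_mul]; exact hα)
  have hmul : (p : GaussianInt) = π * star π := by
    rw [← Zsqrtd.norm_eq_mul_conj, hπ, Int.cast_natCast]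
  have hinter : gaussianNormFiber (p * m) ∩ {α | π ∣ α} ∩
      (gaussianNormFiber (p * m) ∩ {α | star π ∣ α}) =
        gaussianNormFiber (p * m) ∩ {α | (p : GaussianInt) ∣ α} := by
    rw [← Set.inter_inter_distrib_left]
    congr 1
    ext α
    simp only [Set.mem_inter_iff, Set.mem_ofPred_eq, hmul]
    refine ⟨?_, fun h => ⟨dvd_of_mul_right_dvd h, dvd_of_mul_left_dvd h⟩⟩
    rintro ⟨⟨β, rfl⟩, h⟩
    exact mul_dvd_mul_left π ((hprime'.dvd_or_dvd h).resolve_left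
      (not_star_dvd_self hp (by rintro rfl; omega) hπ))
  have h := Set.ncard_union_add_ncard_inter (gaussianNormFiber (p * m) ∩ {α | π ∣ α})
    (gaussianNormFiber (p * m) ∩ {α | star π ∣ α})
    ((finite_gaussianNormFiber _).inter_of_left _) ((finite_gaussianNormFiber _).inter_of_left _)
  rw [hunion, hinter, ncard_gaussianNormFiber_inter_natCast_dvd hp.ne_zero,
    ncard_gaussianNormFiber_inter_dvd hp.ne_zero hπ,
    ncard_gaussianNormFiber_inter_dvd hp.ne_zero hπ', ← two_mul] at h
  exact h

lemma heckeRecursion_ncard_gaussianNormFiber :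
    HeckeRecursion fun n => ((gaussianNormFiber n).ncard : ℂ) / 4 := by
  intro p m hp hm
  dsimp only
  rcases hp.eq_two_or_odd with rfl | hodd
  · rw [ncard_gaussianNormFiber_two_mul]
    simp [χ₄]
  · obtain h | h : p % 4 = 1 ∨ p % 4 = 3 := by omega
    · have key := congrArg (Nat.cast : ℕ → ℂ)
        (ncard_gaussianNormFiber_of_mod_four_eq_one (m := m) hp h)
      push_cast at key
      have hχ : χ₄ p = 1 := by simp [χ₄, h]
      rw [hχ]
      split_ifs at key ⊢ <;> linear_combination key / 4
    · rw [ncard_gaussianNormFiber_of_mod_four_eq_three hp h]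
      have hχ : χ₄ p = -1 := by simp [χ₄, h]
      rw [hχ]
      split_ifs <;> simp

lemma ncard_gaussianNormFiber_one : (gaussianNormFiber 1).ncard = 4 := by
  have h : gaussianNormFiber 1 =
      (({⟨1, 0⟩, ⟨-1, 0⟩, ⟨0, 1⟩, ⟨0, -1⟩} : Finset GaussianInt) : Set GaussianInt) := by
    ext ⟨a, b⟩
    simp only [gaussianNormFiber, Set.mem_ofPred_eq, Zsqrtd.norm_def, Finset.coe_insert,
      Finset.coe_singleton, Set.mem_insert_iff, Set.mem_singleton_iff, Zsqrtd.ext_iff]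
    constructor
    · intro h
      rw [Nat.cast_one] at h
      have ha : -1 ≤ a ∧ a ≤ 1 := by constructor <;> nlinarith [mul_self_nonneg b]
      have hb : -1 ≤ b ∧ b ≤ 1 := by constructor <;> nlinarith [mul_self_nonneg a]
      obtain ⟨ha₁, ha₂⟩ := ha
      obtain ⟨hb₁, hb₂⟩ := hb
      interval_cases a <;> interval_cases b <;> simp_all
    · rintro (⟨rfl, rfl⟩ | ⟨rfl, rfl⟩ | ⟨rfl, rfl⟩ | ⟨rfl, rfl⟩) <;> norm_num
  rw [h, Set.ncard_coe_finset]
  decide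

/-- **Jacobi's two-square theorem**. -/
theorem ncard_gaussianNormFiber {n : ℕ} (hn : n ≠ 0) :
    ((gaussianNormFiber n).ncard : ℂ) = 4 * ∑ d ∈ n.divisors, χ₄ d := by
  have h := heckeRecursion_ncard_gaussianNormFiber.eq heckeRecursion_chiDivisorSum
    (by simp [ncard_gaussianNormFiber_one, chiDivisorSum, χ₄]) hn
  rw [← chiDivisorSum, ← h]
  ring

lemma ncard_gaussianNormFiber_zero : (gaussianNormFiber 0).ncard = 1 := by
  have h : gaussianNormFiber 0 = {0} := by
    ext α
    simp [gaussianNormFiber, GaussianInt.norm_eq_zero]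
  rw [h, Set.ncard_singleton]

lemma hasSum_qq_sq {τ : ℂ} (hτ : 0 < τ.im) :
    HasSum (fun n : ℤ => qq τ ^ (n.natAbs ^ 2)) (jacobiTheta (2 * τ)) := by
  have h := hasSum_jacobiTheta₂_term 0 (τ := 2 * τ) (by simpa using hτ)
  rw [← jacobiTheta_eq_jacobiTheta₂] at h
  refine h.congr_fun fun n => ?_
  have hn : ((n.natAbs ^ 2 : ℕ) : ℂ) = (n : ℂ) ^ 2 := by
    rw [← Int.cast_natCast, Nat.cast_pow, Int.natCast_natAbs, sq_abs, Int.cast_pow]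
  rw [qq, ← Complex.exp_nat_mul, hn, jacobiTheta₂_term]
  congr 1
  ring

/-- The coordinates of a Gaussian integer. -/
def gaussianIntEquivProd : GaussianInt ≃ ℤ × ℤ where
  toFun α := (α.re, α.im)
  invFun x := ⟨x.1, x.2⟩

/-- The theta series of the Gaussian integers is the square of the Jacobi theta function. -/
lemma hasSum_qq_norm {τ : ℂ} (hτ : 0 < τ.im) :
    HasSum (fun α : GaussianInt => qq τ ^ α.norm.natAbs) (jacobiTheta (2 * τ) ^ 2) := by
  have h := hasSum_qq_sq hτ
  have hs := summable_mul_of_summable_norm h.summable.norm h.summable.norm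
  have hprod := gaussianIntEquivProd.hasSum_iff.2 (h.mul h hs)
  rw [← sq] at hprod
  refine hprod.congr_fun fun α => ?_
  simp only [Function.comp_apply, gaussianIntEquivProd, Equiv.coe_fn_mk]
  rw [GaussianInt.natAbs_norm_eq, pow_add, ← sq, ← sq]

lemma natAbs_norm_preimage (n : ℕ) :
    (fun α : GaussianInt => α.norm.natAbs) ⁻¹' {n} = gaussianNormFiber n := by
  ext α
  have := GaussianInt.abs_natCast_norm α
  simp only [gaussianNormFiber, Set.mem_preimage, Set.mem_singleton_iff, Set.mem_ofPred_eq]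
  omega

lemma hasSum_ncard_gaussianNormFiber_mul {τ : ℂ} (hτ : 0 < τ.im) :
    HasSum (fun n : ℕ => ((gaussianNormFiber n).ncard : ℂ) * qq τ ^ n)
      (jacobiTheta (2 * τ) ^ 2) := by
  refine ((hasSum_qq_norm hτ).tsum_fiberwise fun α => α.norm.natAbs).congr_fun fun n => ?_
  have hterm (α : (fun α : GaussianInt => α.norm.natAbs) ⁻¹' {n}) :
      qq τ ^ (α : GaussianInt).norm.natAbs = qq τ ^ n := congrArg _ α.2
  rw [tsum_congr hterm, tsum_const, natAbs_norm_preimage, Nat.card_coe_set_eq, nsmul_eq_mul]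

lemma hasSum_E₁₄ {τ : ℂ} (hτ : 0 < τ.im) :
    HasSum (fun n : ℕ => ((gaussianNormFiber n).ncard : ℂ) * qq τ ^ n) (4 * E₁₄ τ) := by
  have h := (hasSum_ncard_gaussianNormFiber_mul hτ).summable
  convert h.hasSum using 1
  rw [h.tsum_eq_zero_add, ncard_gaussianNormFiber_zero, E₁₄, mul_add, ← tsum_mul_left]
  congr 1
  · norm_num
  · refine tsum_congr fun n => ?_
    rw [ncard_gaussianNormFiber n.succ_ne_zero, mul_assoc]

lemma four_mul_E₁₄ {τ : ℂ} (hτ : 0 < τ.im) : 4 * E₁₄ τ = jacobiTheta (2 * τ) ^ 2 :=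
  (hasSum_E₁₄ hτ).unique (hasSum_ncard_gaussianNormFiber_mul hτ)

lemma im_neg_inv_pos {τ : ℂ} (hτ : 0 < τ.im) : 0 < (-1 / τ).im := by
  have h := UpperHalfPlane.im_inv_neg_coe_pos ⟨τ, hτ⟩
  rwa [inv_neg, ← one_div, ← neg_div] at h

lemma jacobiTheta_neg_inv_sq {τ : ℂ} (hτ : 0 < τ.im) :
    jacobiTheta (-1 / τ) ^ 2 = -I * τ * jacobiTheta τ ^ 2 := by
  have h := jacobiTheta_S_smul ⟨τ, hτ⟩
  rw [UpperHalfPlane.modular_S_smul] at h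
  have hS : (-1 / τ) = (-τ)⁻¹ := by rw [inv_neg, ← one_div, ← neg_div]
  have h' : jacobiTheta (-τ)⁻¹ = (-I * τ) ^ (1 / 2 : ℂ) * jacobiTheta τ := h
  rw [hS, h', mul_pow, ← Complex.cpow_nat_mul]
  norm_num

lemma E₁₄_neg_inv {τ : ℂ} (hτ : 0 < τ.im) : E₁₄ (-1 / (4 * τ)) = -2 * I * τ * E₁₄ τ := by
  have h4 : 0 < (4 * τ).im := by simpa using hτ
  have h2 : 0 < (2 * τ).im := by simpa using hτ
  have h := four_mul_E₁₄ (im_neg_inv_pos h4)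
  have harg : 2 * (-1 / (4 * τ)) = -1 / (2 * τ) := by
    have : τ ≠ 0 := by rintro rfl; simp at hτ
    field_simp
    norm_num
  rw [harg, jacobiTheta_neg_inv_sq h2, ← four_mul_E₁₄ hτ] at h
  linear_combination h / 4

lemma E₁₄_half_add {τ : ℂ} (hτ : 0 < τ.im) :
    E₁₄ (τ / 2) + E₁₄ ((τ + 1) / 2) = 2 * E₁₄ τ := by
  have h1 := hasSum_E₁₄ (τ := τ / 2) (by simpa using hτ)
  have h2 := hasSum_E₁₄ (τ := (τ + 1) / 2) (by simpa using hτ)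
  have hq : qq ((τ + 1) / 2) = - qq (τ / 2) := by
    rw [qq, qq, ← mul_neg_one, ← Complex.exp_pi_mul_I, ← Complex.exp_add]
    congr 1
    ring
  have hq2 : qq (τ / 2) ^ 2 = qq τ := by
    rw [qq, qq, ← Complex.exp_nat_mul]
    congr 1
    push_cast
    ring
  have hsum := h1.add h2
  have heven : HasSum (fun k : ℕ =>
      ((gaussianNormFiber (2 * k)).ncard : ℂ) * qq (τ / 2) ^ (2 * k) +
        (gaussianNormFiber (2 * k)).ncard * qq ((τ + 1) / 2) ^ (2 * k)) (2 * (4 * E₁₄ τ)) := by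
    refine ((hasSum_E₁₄ hτ).mul_left 2).congr_fun fun k => ?_
    rw [ncard_gaussianNormFiber_two_mul, hq, pow_mul, pow_mul, neg_sq, hq2]
    ring
  have hodd : HasSum (fun k : ℕ =>
      ((gaussianNormFiber (2 * k + 1)).ncard : ℂ) * qq (τ / 2) ^ (2 * k + 1) +
        (gaussianNormFiber (2 * k + 1)).ncard * qq ((τ + 1) / 2) ^ (2 * k + 1)) 0 := by
    refine hasSum_zero.congr_fun fun k => ?_
    rw [hq, Odd.neg_pow ⟨k, rfl⟩]
    ring
  have h := hsum.unique (heven.even_add_odd hodd)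
  linear_combination h / 4

lemma f₂_eq (j : ℕ) {τ : ℂ} (hτ : 0 < τ.im) :
    f₂ j τ = 4 * E₁₄ τ + (-1 : ℂ) ^ j * 4 * I * (E₁₄ (τ / 2) - E₁₄ τ) := by
  rw [f₂]
  linear_combination (-(-1 : ℂ) ^ j * 2 * I) * E₁₄_half_add hτ

theorem stmt10 (j : ℕ) (hj : j < 2) (τ : ℂ) (hτ : 0 < τ.im) :
    f₂ j (-1 / (2 * τ)) = ((-1 : ℂ) ^ j - Complex.I) * τ * f₂ (j + 1) τ := by
  have h2 : 0 < (2 * τ).im := by simpa using hτ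
  have hhalf := E₁₄_neg_inv (τ := τ / 2) (by simpa using hτ)
  rw [show 4 * (τ / 2) = 2 * τ by ring] at hhalf
  have harg : -1 / (2 * τ) / 2 = -1 / (4 * τ) := by
    rw [div_div]
    ring_nf
  rw [f₂_eq j (im_neg_inv_pos h2), f₂_eq (j + 1) hτ, harg, E₁₄_neg_inv hτ, hhalf]
  interval_cases j <;> ring_nf <;> simp only [I_sq] <;> ring
end

section
/- For every τ in the complex upper half plane, E_{3,2}(τ) = 36·E_{1,−3}(τ)², i.e. E_{3,2} = (6E_{1,−3})². -/
open Complex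

/-- The term `qⁿ⁺¹ / (1 - qⁿ⁺¹)` of a Lambert series. -/
noncomputable def lambertTerm (q : ℂ) (n : ℕ) : ℂ := q ^ (n + 1) / (1 - q ^ (n + 1))

/-- `2 cos(2πn/3)`, that is `2` if `3 ∣ n` and `-1` otherwise. -/
noncomputable def twoCosThird (n : ℕ) : ℂ := if n % 3 = 0 then 2 else -1

theorem HasSum.of_forall_eq {f g : ℕ → ℂ} {s t : ℂ} (hf : HasSum f s) (h : ∀ n, g n = f n)
    (hst : t = s) : HasSum g t := by
  rw [funext h, hst]
  exact hf

section DoubleSeries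

variable {f : ℕ × ℕ → ℂ}

theorem hasSum_antidiagonal (hf : Summable f) :
    HasSum (fun N ↦ ∑ p ∈ Finset.HasAntidiagonal.antidiagonal N, f p) (∑' p, f p) := by
  have h := (Finset.HasAntidiagonal.sigmaAntidiagonalEquivProd (A := ℕ)).hasSum_iff.mpr hf.hasSum
  refine h.sigma fun N ↦ ?_
  rw [← Finset.sum_coe_sort]
  exact hasSum_fintype _

theorem hasSum_antidiagonal_succ (hf : Summable f) {g : ℕ → ℂ} (g_zero : g 0 = 0)
    (g_succ : ∀ N, ∑ p ∈ Finset.HasAntidiagonal.antidiagonal N, f p = g (N + 1)) :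
    HasSum g (∑' p, f p) := by
  have h := hasSum_antidiagonal hf
  simp only [g_succ] at h
  simpa [g_zero] using (hasSum_nat_add_iff 1).mp h

/-- Splitting a double series into its diagonal and the parts above and below it. -/
theorem tsum_eq_diagonal_add_upper_add_lower (hf : Summable f) :
    ∑' p, f p = ∑' n, f (n, n) + ∑' p : ℕ × ℕ, f (p.2, p.2 + p.1 + 1)
      + ∑' p : ℕ × ℕ, f (p.2 + p.1 + 1, p.2) := by
  have hd : Function.Injective fun n : ℕ ↦ (n, n) := fun a b h ↦ (Prod.ext_iff.mp h).1
  have hu : Function.Injective fun p : ℕ × ℕ ↦ (p.2, p.2 + p.1 + 1) := by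
    rintro ⟨a, b⟩ ⟨c, d⟩ h
    simp only [Prod.mk.injEq] at h ⊢
    lia
  have hl : Function.Injective fun p : ℕ × ℕ ↦ (p.2 + p.1 + 1, p.2) := by
    rintro ⟨a, b⟩ ⟨c, d⟩ h
    simp only [Prod.mk.injEq] at h ⊢
    lia
  have hf' (s : Set (ℕ × ℕ)) : Summable (s.indicator f) := hf.indicator s
  have split : f = fun p ↦ {p : ℕ × ℕ | p.1 = p.2}.indicator f p
      + {p : ℕ × ℕ | p.1 < p.2}.indicator f p + {p : ℕ × ℕ | p.2 < p.1}.indicator f p := by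
    funext p
    rcases lt_trichotomy p.1 p.2 with h | h | h
    · simp [Set.indicator, h, h.ne, h.not_gt]
    · simp [Set.indicator, h]
    · simp [Set.indicator, h, h.ne', h.not_gt]
  conv_lhs => rw [split]
  rw [((hf' _).add (hf' _)).tsum_add (hf' _), (hf' _).tsum_add (hf' _)]
  refine congrArg₂ _ (congrArg₂ _ ?_ ?_) ?_
  · rw [← hd.tsum_eq]
    · simp [Set.indicator]
    · rintro ⟨a, b⟩ h
      have h' : (a, b) ∈ {p : ℕ × ℕ | p.1 = p.2} := Set.mem_of_indicator_ne_zero h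
      exact ⟨a, by simpa using h'⟩
  · rw [← hu.tsum_eq]
    · simp [Set.indicator, add_assoc]
    · rintro ⟨a, b⟩ h
      have h' : (a, b) ∈ {p : ℕ × ℕ | p.1 < p.2} := Set.mem_of_indicator_ne_zero h
      simp only [Set.mem_ofPred_eq] at h'
      exact ⟨(b - a - 1, a), by simp; lia⟩
  · rw [← hl.tsum_eq]
    · simp [Set.indicator, add_assoc]
    · rintro ⟨a, b⟩ h
      have h' : (a, b) ∈ {p : ℕ × ℕ | p.2 < p.1} := Set.mem_of_indicator_ne_zero h
      simp only [Set.mem_ofPred_eq] at h'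
      exact ⟨(a - b - 1, b), by simp; lia⟩

theorem summable_of_norm_le_geometric {r M : ℝ} (hr0 : 0 ≤ r) (hr : r < 1)
    (h : ∀ p, ‖f p‖ ≤ M * (r ^ p.1 * r ^ p.2)) : Summable f := by
  have hg := summable_geometric_of_lt_one hr0 hr
  exact .of_norm_bounded
    ((hg.mul_of_nonneg hg (fun _ ↦ by positivity) fun _ ↦ by positivity).mul_left M) h

end DoubleSeries

section LambertTerm

variable {q : ℂ}

theorem one_sub_pow_succ_ne_zero (hq : ‖q‖ < 1) (n : ℕ) : 1 - q ^ (n + 1) ≠ 0 := by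
  intro h
  have h1 : ‖q ^ (n + 1)‖ < 1 := by
    rw [norm_pow]
    exact pow_lt_one₀ (norm_nonneg _) hq n.succ_ne_zero
  rw [← sub_eq_zero.mp h] at h1
  simp at h1

theorem norm_lambertTerm_le (hq : ‖q‖ < 1) (n : ℕ) :
    ‖lambertTerm q n‖ ≤ (1 - ‖q‖)⁻¹ * ‖q‖ ^ n := by
  have h0 : 0 < 1 - ‖q‖ := by linarith
  have h1 : ‖q‖ ^ (n + 1) ≤ ‖q‖ := pow_le_of_le_one (norm_nonneg _) hq.le n.succ_ne_zero
  have h2 : 1 - ‖q‖ ≤ ‖1 - q ^ (n + 1)‖ := by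
    have := norm_sub_norm_le (1 : ℂ) (q ^ (n + 1))
    rw [norm_one, norm_pow] at this
    linarith
  rw [lambertTerm, norm_div, norm_pow, div_eq_inv_mul]
  exact mul_le_mul (inv_anti₀ h0 h2) (pow_le_pow_of_le_one (norm_nonneg _) hq.le n.le_succ)
    (by positivity) (by positivity)

theorem lambertTerm_mul_antidiagonal (hq : ‖q‖ < 1) (i j : ℕ) :
    lambertTerm q i * lambertTerm q j
      = lambertTerm q (i + j + 1) * (1 + lambertTerm q i + lambertTerm q j) := by
  have hi := one_sub_pow_succ_ne_zero hq i
  have hj := one_sub_pow_succ_ne_zero hq j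
  have hij := one_sub_pow_succ_ne_zero hq (i + j + 1)
  have e : q ^ (i + j + 1 + 1) = q ^ (i + 1) * q ^ (j + 1) := by ring
  simp only [lambertTerm]
  rw [e] at hij ⊢
  generalize q ^ (i + 1) = x at *
  generalize q ^ (j + 1) = y at *
  field_simp
  ring

theorem lambertTerm_mul_shift (hq : ‖q‖ < 1) (i k : ℕ) :
    lambertTerm q i * lambertTerm q (i + k + 1)
      = lambertTerm q k * (lambertTerm q i - lambertTerm q (i + k + 1))
        - lambertTerm q (i + k + 1) := by
  linear_combination -lambertTerm_mul_antidiagonal hq i k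

theorem norm_lambertTerm_le_const (hq : ‖q‖ < 1) (n : ℕ) : ‖lambertTerm q n‖ ≤ (1 - ‖q‖)⁻¹ := by
  have h0 : 0 < 1 - ‖q‖ := by linarith
  exact (norm_lambertTerm_le hq n).trans
    (mul_le_of_le_one_right (by positivity) (pow_le_one₀ (norm_nonneg _) hq.le))

theorem norm_lambertTerm_add_le (hq : ‖q‖ < 1) (k i : ℕ) :
    ‖lambertTerm q (i + k + 1)‖ ≤ (1 - ‖q‖)⁻¹ * (‖q‖ ^ k * ‖q‖ ^ i) := by
  have h0 : 0 < 1 - ‖q‖ := by linarith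
  refine (norm_lambertTerm_le hq _).trans ?_
  gcongr
  rw [← pow_add]
  exact pow_le_pow_of_le_one (norm_nonneg _) hq.le (by lia)

theorem norm_lambertTerm_mul_le (hq : ‖q‖ < 1) (i j : ℕ) :
    ‖lambertTerm q i * lambertTerm q j‖
      ≤ ((1 - ‖q‖)⁻¹ * (1 - ‖q‖)⁻¹) * (‖q‖ ^ i * ‖q‖ ^ j) := by
  rw [norm_mul]
  calc _ ≤ ((1 - ‖q‖)⁻¹ * ‖q‖ ^ i) * ((1 - ‖q‖)⁻¹ * ‖q‖ ^ j) :=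
        mul_le_mul (norm_lambertTerm_le hq i) (norm_lambertTerm_le hq j) (norm_nonneg _)
          ((norm_nonneg _).trans (norm_lambertTerm_le hq i))
    _ = _ := by ring

theorem summable_lambertTerm (hq : ‖q‖ < 1) : Summable (lambertTerm q) :=
  .of_norm_bounded ((summable_geometric_of_lt_one (norm_nonneg _) hq).mul_left _)
    (norm_lambertTerm_le hq)

theorem summable_weight_mul_lambertTerm_mul (hq : ‖q‖ < 1) {w : ℕ × ℕ → ℂ} {M : ℝ}
    (hw : ∀ p, ‖w p‖ ≤ M) :
    Summable fun p : ℕ × ℕ ↦ w p * (lambertTerm q p.1 * lambertTerm q p.2) := by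
  have hM : 0 ≤ M := (norm_nonneg _).trans (hw (0, 0))
  refine summable_of_norm_le_geometric (norm_nonneg q) hq
    (M := M * ((1 - ‖q‖)⁻¹ * (1 - ‖q‖)⁻¹)) fun p ↦ ?_
  rw [norm_mul, mul_assoc M]
  exact mul_le_mul (hw p) (norm_lambertTerm_mul_le hq _ _) (norm_nonneg _) hM

theorem summable_weight_mul_lambertTerm_add (hq : ‖q‖ < 1) {w : ℕ × ℕ → ℂ} {M : ℝ}
    (hw : ∀ p, ‖w p‖ ≤ M) :
    Summable fun p : ℕ × ℕ ↦ w p * lambertTerm q (p.2 + p.1 + 1) := by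
  have hM : 0 ≤ M := (norm_nonneg _).trans (hw (0, 0))
  refine summable_of_norm_le_geometric (norm_nonneg q) hq (M := M * (1 - ‖q‖)⁻¹) fun p ↦ ?_
  rw [norm_mul, mul_assoc M]
  exact mul_le_mul (hw p) (norm_lambertTerm_add_le hq _ _) (norm_nonneg _) hM

theorem hasSum_lambertTerm_sub_shift (hq : ‖q‖ < 1) (k : ℕ) :
    HasSum (fun i ↦ lambertTerm q i - lambertTerm q (i + k + 1))
      (∑ i ∈ Finset.range (k + 1), lambertTerm q i) := by
  have h := summable_lambertTerm hq
  have h' := h.hasSum.sub ((summable_nat_add_iff (k + 1)).mpr h).hasSum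
  rwa [← h.sum_add_tsum_nat_add (k + 1), add_sub_cancel_right] at h'

end LambertTerm

section TwoCosThird

theorem norm_twoCosThird_le (n : ℕ) : ‖twoCosThird n‖ ≤ 2 := by
  unfold twoCosThird
  split_ifs <;> simp

theorem norm_χ₃_le (n : ℕ) : ‖χ₃ n‖ ≤ 1 := by
  unfold χ₃
  split_ifs <;> simp

theorem three_mul_χ₃_mul_χ₃ (i k : ℕ) :
    3 * (χ₃ i * χ₃ (i + k)) = twoCosThird k - twoCosThird (i + (i + k)) := by
  have hi : i % 3 < 3 := Nat.mod_lt _ (by norm_num)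
  have hk : k % 3 < 3 := Nat.mod_lt _ (by norm_num)
  simp only [χ₃, twoCosThird, Nat.add_mod i]
  generalize i % 3 = a at *
  generalize k % 3 = b at *
  interval_cases a <;> interval_cases b <;> norm_num

theorem two_mul_sum_twoCosThird (n : ℕ) :
    2 * ∑ k ∈ Finset.range n, twoCosThird (k + 1)
      = χ₃ (n + 1) - twoCosThird (n + 1) - 2 := by
  induction n with
  | zero => norm_num [χ₃, twoCosThird]
  | succ n ih =>
    rw [Finset.sum_range_succ, mul_add, ih]
    have hn : n % 3 < 3 := Nat.mod_lt _ (by norm_num)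
    simp only [χ₃, twoCosThird, Nat.add_mod n, Nat.add_mod (n + 1)]
    generalize n % 3 = a at *
    interval_cases a <;> norm_num

end TwoCosThird

section Square

variable {q : ℂ}

theorem hasSum_twoCosThird_antidiagonal (hq : ‖q‖ < 1) :
    HasSum (fun n ↦ twoCosThird (n + 1) * lambertTerm q n
        * (n + 2 * ∑ i ∈ Finset.range n, lambertTerm q i))
      (∑' p : ℕ × ℕ, twoCosThird (p.1 + p.2 + 2) * (lambertTerm q p.1 * lambertTerm q p.2)) := by
  refine hasSum_antidiagonal_succ
    (summable_weight_mul_lambertTerm_mul hq fun p ↦ norm_twoCosThird_le _) (by simp) fun N ↦ ?_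
  have h (p : ℕ × ℕ) (hp : p ∈ Finset.HasAntidiagonal.antidiagonal N) :
      twoCosThird (p.1 + p.2 + 2) * (lambertTerm q p.1 * lambertTerm q p.2)
        = twoCosThird (N + 1 + 1) * lambertTerm q (N + 1)
          * (1 + lambertTerm q p.1 + lambertTerm q p.2) := by
    rw [lambertTerm_mul_antidiagonal hq, Finset.HasAntidiagonal.mem_antidiagonal.mp hp]
    ring
  rw [Finset.sum_congr rfl h, ← Finset.mul_sum, Finset.sum_add_distrib, Finset.sum_add_distrib,
    ← Finset.Nat.sum_antidiagonal_swap (f := fun p : ℕ × ℕ ↦ lambertTerm q p.2)]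
  simp only [Prod.snd_swap,
    Finset.Nat.sum_antidiagonal_eq_sum_range_succ (fun i _ ↦ lambertTerm q i)]
  rw [Finset.sum_const, Finset.Nat.card_antidiagonal, nsmul_eq_mul]
  push_cast
  ring

theorem hasSum_twoCosThird_shift (hq : ‖q‖ < 1) :
    HasSum (fun n ↦ twoCosThird (n + 1) * lambertTerm q n
          * ∑ i ∈ Finset.range (n + 1), lambertTerm q i
        - lambertTerm q n * ∑ k ∈ Finset.range n, twoCosThird (k + 1))
      (∑' p : ℕ × ℕ, twoCosThird (p.1 + 1)
        * (lambertTerm q p.2 * lambertTerm q (p.2 + p.1 + 1))) := by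
  have s₁ := summable_weight_mul_lambertTerm_mul hq
    (w := fun p ↦ twoCosThird (p.1 + 1)) fun p ↦ norm_twoCosThird_le _
  have s₂ := summable_weight_mul_lambertTerm_add hq
    (w := fun p ↦ twoCosThird (p.1 + 1) * lambertTerm q p.1) (M := 2 * (1 - ‖q‖)⁻¹) fun p ↦ by
      rw [norm_mul]
      exact mul_le_mul (norm_twoCosThird_le _) (norm_lambertTerm_le_const hq _)
        (norm_nonneg _) zero_le_two
  have s₃ := summable_weight_mul_lambertTerm_add hq
    (w := fun p ↦ twoCosThird (p.1 + 1)) fun p ↦ norm_twoCosThird_le _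
  have h₁ := (s₁.sub s₂).hasSum.prod_fiberwise fun k ↦ by
    simpa only [mul_sub, mul_assoc] using
      (hasSum_lambertTerm_sub_shift hq k).mul_left (twoCosThird (k + 1) * lambertTerm q k)
  have h₂ : HasSum (fun n ↦ lambertTerm q n * ∑ k ∈ Finset.range n, twoCosThird (k + 1)) _ :=
    hasSum_antidiagonal_succ s₃ (by simp) fun N ↦ by
      have h (p : ℕ × ℕ) (hp : p ∈ Finset.HasAntidiagonal.antidiagonal N) :
          twoCosThird (p.1 + 1) * lambertTerm q (p.2 + p.1 + 1)
            = lambertTerm q (N + 1) * twoCosThird (p.1 + 1) := by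
        rw [add_comm p.2, Finset.HasAntidiagonal.mem_antidiagonal.mp hp, mul_comm]
      rw [Finset.sum_congr rfl h, ← Finset.mul_sum,
        Finset.Nat.sum_antidiagonal_eq_sum_range_succ (fun i _ ↦ twoCosThird (i + 1))]
  refine (h₁.sub h₂).of_forall_eq (fun n ↦ by simp only [mul_assoc]) ?_
  rw [← (s₁.sub s₂).tsum_sub s₃]
  refine tsum_congr fun p ↦ ?_
  rw [lambertTerm_mul_shift hq]
  ring

theorem hasSum_three_mul_tsum_χ₃_sq (hq : ‖q‖ < 1) :
    HasSum (fun n ↦ (2 + 2 * twoCosThird (n + 1)) * (lambertTerm q n ^ 2 + lambertTerm q n)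
        - twoCosThird (n + 1) * ((n + 1) * lambertTerm q n) - χ₃ (n + 1) * lambertTerm q n)
      (3 * (∑' n, χ₃ (n + 1) * lambertTerm q n) ^ 2) := by
  have hs : Summable fun n ↦ ‖χ₃ (n + 1) * lambertTerm q n‖ :=
    .of_nonneg_of_le (fun _ ↦ norm_nonneg _) (fun n ↦ by
      rw [norm_mul]
      exact mul_le_of_le_one_left (norm_nonneg _) (norm_χ₃_le _)) (summable_lambertTerm hq).norm
  let w : ℕ × ℕ → ℂ := fun p ↦
    3 * (χ₃ (p.1 + 1) * χ₃ (p.2 + 1)) + twoCosThird (p.1 + p.2 + 2)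
  have hw (i k : ℕ) : w (i, i + k) = twoCosThird k := by
    have h := three_mul_χ₃_mul_χ₃ (i + 1) k
    simp only [w]
    rw [show i + k + 1 = i + 1 + k by ring, h,
      show i + (i + k) + 2 = i + 1 + (i + 1 + k) by ring]
    ring
  have hw' (i k : ℕ) : w (i + k, i) = twoCosThird k := by
    rw [← hw i k]
    simp only [w, add_comm (i + k) i, mul_comm (χ₃ (i + k + 1))]
  have hs₁ := summable_weight_mul_lambertTerm_mul hq (w := w) (M := 5) fun p ↦ by
    refine (norm_add_le _ _).trans ?_
    have h1 : ‖χ₃ (p.1 + 1) * χ₃ (p.2 + 1)‖ ≤ 1 := by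
      rw [norm_mul]
      exact mul_le_one₀ (norm_χ₃_le _) (norm_nonneg _) (norm_χ₃_le _)
    rw [norm_mul, Complex.norm_ofNat]
    linarith [norm_twoCosThird_le (p.1 + p.2 + 2)]
  have hs₂ := summable_weight_mul_lambertTerm_mul hq
    (w := fun p ↦ twoCosThird (p.1 + p.2 + 2)) fun p ↦ norm_twoCosThird_le _
  have hd : HasSum (fun n ↦ 2 * (lambertTerm q n * lambertTerm q n))
      (∑' n, w (n, n) * (lambertTerm q n * lambertTerm q n)) := by
    have h (n : ℕ) : w (n, n) = 2 := by simpa [twoCosThird] using hw n 0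
    simp only [h]
    have hsq := hs₁.comp_injective
      (show Function.Injective fun n : ℕ ↦ (n, n) from fun a b h ↦ (Prod.ext_iff.mp h).1)
    simpa only [Function.comp_def, h] using hsq.hasSum
  have key := (hd.add ((hasSum_twoCosThird_shift hq).mul_left 2)).sub
    (hasSum_twoCosThird_antidiagonal hq)
  refine key.of_forall_eq (fun n ↦ ?_) ?_
  · rw [Finset.sum_range_succ]
    linear_combination lambertTerm q n * two_mul_sum_twoCosThird n
  · rw [sq, tsum_mul_tsum_of_summable_norm hs hs, ← tsum_mul_left, eq_sub_iff_add_eq]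
    have hsplit := tsum_eq_diagonal_add_upper_add_lower hs₁
    simp only [add_assoc, hw, hw', mul_comm (lambertTerm q (_ + (_ + 1)))] at hsplit
    simp only [add_assoc _ _ 1, two_mul]
    rw [← hsplit, ← Summable.tsum_add _ hs₂]
    · refine tsum_congr fun p ↦ ?_
      simp only [w]
      ring
    · refine (hs₁.sub hs₂).congr fun p ↦ ?_
      simp only [w]
      ring

end Square

theorem norm_pow_pnat_lt_one {q : ℂ} (hq : ‖q‖ < 1) (n : ℕ+) : ‖q ^ (n : ℕ)‖ < 1 := by
  rw [norm_pow]
  exact pow_lt_one₀ (norm_nonneg _) hq n.ne_zero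

section DivisorSums

variable {q : ℂ} {a : ℕ → ℂ}

theorem summable_mul_pow_mul (hq : ‖q‖ < 1) (ha : ∀ n, ‖a n‖ ≤ n) :
    Summable fun p : ℕ+ × ℕ+ ↦ a p.2 * q ^ (p.1 * p.2 : ℕ) := by
  refine .of_norm_bounded (summable_prod_mul_pow 1 hq).norm fun p ↦ ?_
  simp only [norm_mul, pow_one]
  gcongr
  simpa using ha p.2

theorem tsum_sum_divisors_mul_pow (hq : ‖q‖ < 1) (ha : ∀ n, ‖a n‖ ≤ n) :
    ∑' n : ℕ, (∑ d ∈ (n + 1).divisors, a d) * q ^ (n + 1)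
      = ∑' p : ℕ+ × ℕ+, a p.2 * q ^ (p.1 * p.2 : ℕ) := by
  have hs := sigmaAntidiagonalEquivProd.summable_iff.mpr (summable_mul_pow_mul hq ha)
  rw [← tsum_pnat_eq_tsum_succ (f := fun n ↦ (∑ d ∈ n.divisors, a d) * q ^ n),
    ← sigmaAntidiagonalEquivProd.tsum_eq]
  refine Eq.trans ?_ hs.tsum_sigma.symm
  refine tsum_congr fun n ↦ ?_
  rw [tsum_fintype, Finset.sum_mul]
  refine Eq.trans ?_ ((n : ℕ).divisorsAntidiagonal.sum_coe_sort
    fun p ↦ a p.2 * q ^ (p.1 * p.2)).symm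
  rw [Nat.sum_divisorsAntidiagonal' fun i j ↦ a j * q ^ (i * j)]
  exact Finset.sum_congr rfl fun d hd ↦ by rw [Nat.div_mul_cancel (Nat.dvd_of_mem_divisors hd)]

theorem hasSum_mul_lambertTerm (hq : ‖q‖ < 1) (ha : ∀ n, ‖a n‖ ≤ n) :
    HasSum (fun n ↦ a (n + 1) * lambertTerm q n)
      (∑' n : ℕ, (∑ d ∈ (n + 1).divisors, a d) * q ^ (n + 1)) := by
  have h := ((Equiv.prodComm ℕ+ ℕ+).hasSum_iff.mpr
    (summable_mul_pow_mul hq ha).hasSum).prod_fiberwise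
    (g := fun c : ℕ+ ↦ a c * (q ^ (c : ℕ) / (1 - q ^ (c : ℕ)))) fun c ↦ by
      rw [← Equiv.pnatEquivNat.symm.hasSum_iff]
      have h := (hasSum_geometric_of_norm_lt_one (norm_pow_pnat_lt_one hq c)).mul_left
        (a c * q ^ (c : ℕ))
      simp only [div_eq_mul_inv, ← mul_assoc]
      refine h.of_forall_eq (fun d ↦ ?_) rfl
      simp only [Function.comp_apply, Equiv.prodComm_apply, Prod.swap_prod_mk,
        Equiv.pnatEquivNat_symm_apply, Nat.succPNat_coe, Nat.succ_eq_add_one]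
      ring
  rw [tsum_sum_divisors_mul_pow hq ha]
  exact Equiv.pnatEquivNat.symm.hasSum_iff.mpr h

end DivisorSums

section Sigma

variable {q : ℂ}

theorem hasSum_sigma_eq_mul_lambertTerm (hq : ‖q‖ < 1) :
    HasSum (fun n : ℕ ↦ ((n : ℂ) + 1) * lambertTerm q n)
      (∑' n : ℕ, sigmaC 1 (n + 1) * q ^ (n + 1)) := by
  simpa [sigmaC] using hasSum_mul_lambertTerm hq (a := fun n ↦ (n : ℂ)) (by simp)

theorem hasSum_sigma_eq_lambertTerm_sq_add (hq : ‖q‖ < 1) :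
    HasSum (fun n : ℕ ↦ lambertTerm q n ^ 2 + lambertTerm q n)
      (∑' n : ℕ, sigmaC 1 (n + 1) * q ^ (n + 1)) := by
  have ha (n : ℕ) : ‖(n : ℂ)‖ ≤ n := by simp
  have h := (summable_mul_pow_mul (a := fun n ↦ (n : ℂ)) hq ha).hasSum.prod_fiberwise
    (g := fun d : ℕ+ ↦ q ^ (d : ℕ) / (1 - q ^ (d : ℕ)) ^ 2) fun d ↦ by
      rw [← Equiv.pnatEquivNat.symm.hasSum_iff]
      have h₀ := hasSum_coe_mul_geometric_of_norm_lt_one (norm_pow_pnat_lt_one hq d)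
      have h := (hasSum_nat_add_iff' 1).mpr h₀
      simp only [Finset.sum_range_one, Nat.cast_zero, zero_mul, sub_zero] at h
      refine h.of_forall_eq (fun c ↦ ?_) rfl
      simp only [Function.comp_apply, Equiv.pnatEquivNat_symm_apply, Nat.succPNat_coe, pow_mul]
  rw [← tsum_sum_divisors_mul_pow (a := fun n ↦ (n : ℂ)) hq ha] at h
  simp only [sigmaC, pow_one]
  refine (Equiv.pnatEquivNat.symm.hasSum_iff.mpr h).of_forall_eq (fun n ↦ ?_) rfl
  have hn := one_sub_pow_succ_ne_zero hq n
  simp only [lambertTerm, Function.comp_apply, Equiv.pnatEquivNat_symm_apply, Nat.succPNat_coe,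
    Nat.succ_eq_add_one]
  field_simp
  ring

end Sigma

theorem lambertTerm_cube (q : ℂ) (n : ℕ) : lambertTerm (q ^ 3) n = lambertTerm q (3 * n + 2) := by
  simp only [lambertTerm, ← pow_mul]
  ring_nf

/-- The factor `1 + twoCosThird (n + 1)` sieves a series to the indices with `3 ∣ n + 1`. -/
theorem hasSum_one_add_twoCosThird_mul {f : ℕ → ℂ} {s : ℂ}
    (h : HasSum (fun n ↦ f (3 * n + 2)) s) :
    HasSum (fun n ↦ (1 + twoCosThird (n + 1)) * f n) (3 * s) := by
  have hinj : Function.Injective fun n : ℕ ↦ 3 * n + 2 := fun a b h ↦ by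
    simp only at h
    lia
  refine (hinj.hasSum_iff fun n hn ↦ ?_).mp
    ((h.mul_left 3).of_forall_eq (fun n ↦ ?_) rfl)
  · have h3 : (n + 1) % 3 ≠ 0 := fun h3 ↦ hn ⟨(n + 1) / 3 - 1, by simp only; lia⟩
    simp [twoCosThird, h3]
  · have h3 : (3 * n + 2 + 1) % 3 = 0 := by lia
    simp only [Function.comp_apply, twoCosThird, h3, if_true]
    norm_num

/-- The square of the Lambert series of `χ₃` in terms of divisor sums. -/
theorem three_mul_tsum_χ₃_sq_add {q : ℂ} (hq : ‖q‖ < 1) :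
    3 * (∑' n : ℕ, (∑ d ∈ (n + 1).divisors, χ₃ d) * q ^ (n + 1)) ^ 2
        + ∑' n : ℕ, (∑ d ∈ (n + 1).divisors, χ₃ d) * q ^ (n + 1)
      = ∑' n : ℕ, sigmaC 1 (n + 1) * q ^ (n + 1)
        - 3 * ∑' n : ℕ, sigmaC 1 (n + 1) * (q ^ 3) ^ (n + 1) := by
  have hq3 : ‖q ^ 3‖ < 1 := by
    rw [norm_pow]
    exact pow_lt_one₀ (norm_nonneg _) hq (by norm_num)
  have hχ := hasSum_mul_lambertTerm hq (a := χ₃) fun n ↦ by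
    rcases n.eq_zero_or_pos with rfl | hn
    · simp [χ₃]
    · exact (norm_χ₃_le n).trans (by exact_mod_cast hn)
  have hS := hasSum_sigma_eq_mul_lambertTerm hq
  have hS3 := hasSum_sigma_eq_mul_lambertTerm hq3
  have hS3' := hasSum_sigma_eq_lambertTerm_sq_add hq3
  simp only [lambertTerm_cube] at hS3 hS3'
  have h₁ := hasSum_one_add_twoCosThird_mul
    (f := fun n ↦ lambertTerm q n ^ 2 + lambertTerm q n) hS3'
  have h₂ := hasSum_one_add_twoCosThird_mul (f := fun n ↦ ((n : ℂ) + 1) * lambertTerm q n)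
    ((hS3.mul_left 3).of_forall_eq (fun n ↦ by push_cast; ring) rfl)
  have key := hasSum_three_mul_tsum_χ₃_sq hq
  rw [hχ.tsum_eq] at key
  have total := ((h₁.mul_left 2).sub (h₂.sub hS)).sub hχ
  have := key.unique (total.of_forall_eq (fun n ↦ by ring) rfl)
  linear_combination this

theorem qq_three_mul (τ : ℂ) : qq (3 * τ) = qq τ ^ 3 := by
  rw [qq, qq, ← Complex.exp_nat_mul]
  push_cast
  ring_nf

theorem norm_qq_lt_one {τ : ℂ} (hτ : 0 < τ.im) : ‖qq τ‖ < 1 := by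
  rw [qq, Complex.norm_exp, Real.exp_lt_one_iff]
  simp
  positivity

theorem stmt11 (τ : ℂ) (hτ : 0 < τ.im) :
    E₃₂ τ = 36 * E₁₃ τ ^ 2 := by
  have h := three_mul_tsum_χ₃_sq_add (norm_qq_lt_one hτ)
  rw [E₃₂, E₂, E₂, E₁₃, qq_three_mul]
  linear_combination (-12) * h
end
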